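/- arXiv:2407.14647 — 4 statements merged into one kernel-verified Lean document; each statement's English description precedes it below -/
import Mathlib

section
/- Let I be a finite type and ξ an invertible square matrix of type (I,I) with entries in a field K. Then for all i, j ∈ I, ξ⁻¹(i,j) = (det ξ)⁻¹ · ∑_{τ ∈ Perm(I), τ(j) = i} (-1)^{|I| + c(τ)} · ∏_{v ∈ I, v ≠ j} ξ(v, τ(v)), where c(τ) is the number of orbits of τ on I (cycles including fixed points). -/
attribute [local instance] Classical.propDecidable

/-- The number of orbits of a permutation `σ` on a finite type `I`, i.e. the number of
cycles in the cycle decomposition of `σ`, counting fixed points as cycles of length one. -/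
noncomputable def orbitCount {I : Type*} [Fintype I] (σ : Equiv.Perm I) : ℕ :=
  Multiset.card σ.cycleType + (Fintype.card I - σ.support.card)

/-- The sign of a permutation is determined by the parity of `|I|` plus its number of orbits. -/
theorem sign_eq_neg_one_pow_card_add_orbitCount {I : Type*} [Fintype I] (τ : Equiv.Perm I) :
    Equiv.Perm.sign τ = (-1) ^ (Fintype.card I + orbitCount τ) := by
  have h : τ.support.card ≤ Fintype.card I := Finset.card_le_univ _
  rw [Equiv.Perm.sign_of_cycleType, Equiv.Perm.sum_cycleType, orbitCount]
  have h' : Fintype.card I + (Multiset.card τ.cycleType + (Fintype.card I - τ.support.card)) =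
      (τ.support.card + Multiset.card τ.cycleType) +
        2 * (Fintype.card I - τ.support.card) := by omega
  rw [h', pow_add _ _ (2 * _), pow_mul]
  simp

/-- The entries of the adjugate as signed sums over the permutations sending `j` to `i`. -/
theorem adjugate_apply_eq_sum_perm {I R : Type*} [Fintype I] [CommRing R] (ξ : Matrix I I R)
    (i j : I) :
    ξ.adjugate i j = ∑ τ ∈ Finset.univ.filter (fun τ : Equiv.Perm I => τ j = i),
      ((Equiv.Perm.sign τ : ℤ) : R) * ∏ v ∈ Finset.univ.erase j, ξ v (τ v) := by
  rw [Matrix.adjugate_apply, ← Matrix.det_transpose, Matrix.det_apply', Finset.sum_filter]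
  refine Finset.sum_congr rfl fun τ _ => ?_
  rw [← Finset.mul_prod_erase _ _ (Finset.mem_univ j)]
  have h : ∏ v ∈ Finset.univ.erase j, (ξ.updateRow j (Pi.single i 1)).transpose (τ v) v =
      ∏ v ∈ Finset.univ.erase j, ξ v (τ v) :=
    Finset.prod_congr rfl fun v hv => by
      rw [Matrix.transpose_apply, Matrix.updateRow_ne (Finset.ne_of_mem_erase hv)]
  rw [h, Matrix.transpose_apply, Matrix.updateRow_self, Pi.single_apply]
  split_ifs <;> simp

theorem stmt2 {I K : Type*} [Fintype I] [Field K] (ξ : Matrix I I K)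
    (hξ : IsUnit ξ.det) (i j : I) :
    ξ⁻¹ i j = ξ.det⁻¹ *
      ∑ τ ∈ Finset.univ.filter (fun τ : Equiv.Perm I => τ j = i),
        (-1 : K) ^ (Fintype.card I + orbitCount τ) *
          ∏ v ∈ Finset.univ.erase j, ξ v (τ v) := by
  rw [Matrix.inv_def, Matrix.smul_apply, smul_eq_mul, Ring.inverse_eq_inv',
    adjugate_apply_eq_sum_perm]
  simp [sign_eq_neg_one_pow_card_add_orbitCount]
end

section
/- Let 𝒜 be a finite skeletal category in which every idempotent endomorphism is an identity, and let ζ over ℚ be its zeta matrix, ζ(a,b) = card Hom(a,b). Then ζ is invertible, and for all objects a, b: ζ⁻¹(a,b) = ∑_{k=0}^{n-1} (-1)^k ∑_{c} ( ∏_{i=0}^{k-1} card Hom(c_i, c_{i+1}) ) / ( ∏_{i=0}^{k} card Hom(c_i, c_i) ), where n is the number of objects and the inner sum ranges over all injective sequences of objects c = (c_0, c_1, …, c_k) with c_0 = a and c_k = b. -/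
open CategoryTheory

attribute [local instance] Classical.propDecidable

/-- The zeta matrix of a finite category: `ζ(a,b) = card Hom(a,b)`, over `ℚ`. -/
noncomputable def zeta (𝒜 : Type*) [Category 𝒜] [∀ a b : 𝒜, Fintype (a ⟶ b)] :
    Matrix 𝒜 𝒜 ℚ :=
  Matrix.of fun a b => (Fintype.card (a ⟶ b) : ℚ)

/-- In a finite monoid every element has a positive power that is idempotent. -/
theorem exists_isIdempotentElem_pow {M : Type*} [Monoid M] [Finite M] (x : M) :
    ∃ n : ℕ, IsIdempotentElem (x ^ (n + 1)) := by
  obtain ⟨m, p, hp, h⟩ : ∃ m p : ℕ, 0 < p ∧ x ^ (m + p) = x ^ m := by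
    obtain ⟨i, j, hij, h⟩ := Finite.exists_ne_map_eq_of_infinite (fun n : ℕ => x ^ n)
    rcases hij.lt_or_gt with hij | hij
    · exact ⟨i, j - i, by omega, by simpa [Nat.add_sub_cancel' hij.le] using h.symm⟩
    · exact ⟨j, i - j, by omega, by simpa [Nat.add_sub_cancel' hij.le] using h⟩
  have periodic : ∀ r q : ℕ, x ^ (m + r + q * p) = x ^ (m + r) := by
    intro r q
    induction q with
    | zero => simp
    | succ q ih =>
      rw [← ih, show m + r + (q + 1) * p = (m + p) + (r + q * p) by ring, pow_add, h, ← pow_add,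
        add_assoc]
  obtain ⟨r, hr⟩ : ∃ r, (m + 1) * p = m + r :=
    Nat.exists_eq_add_of_le ((Nat.le_succ m).trans (Nat.le_mul_of_pos_right _ hp))
  obtain ⟨n, hn⟩ : ∃ n, (m + 1) * p = n + 1 :=
    Nat.exists_eq_add_one.2 (Nat.mul_pos m.succ_pos hp)
  refine ⟨n, ?_⟩
  rw [← hn, IsIdempotentElem, ← pow_add]
  have := periodic r (m + 1)
  rwa [← hr] at this

/-- If all idempotents are identities, two objects of a finite category with morphisms in both
directions are isomorphic. -/
theorem nonempty_iso_of_hom_of_hom {𝒜 : Type*} [Category 𝒜] [∀ a b : 𝒜, Finite (a ⟶ b)]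
    (hid : ∀ (a : 𝒜) (f : a ⟶ a), f ≫ f = f → f = 𝟙 a) {a b : 𝒜} (f : a ⟶ b) (g : b ⟶ a) :
    Nonempty (a ≅ b) := by
  have : Finite (End a) := inferInstanceAs (Finite (a ⟶ a))
  let e : End a := f ≫ g
  obtain ⟨n, hn⟩ := exists_isIdempotentElem_pow e
  have hone : e ^ (n + 1) = 𝟙 a := hid a _ hn
  rw [pow_succ, End.mul_def, Category.assoc] at hone
  refine ⟨⟨f, g ≫ (e ^ n : End a), hone, hid b _ ?_⟩⟩
  rw [Category.assoc, ← Category.assoc f, ← Category.assoc f, Category.assoc f, hone,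
    Category.id_comp]

/-- The order on the objects of a finite skeletal category whose idempotents are identities:
`a ≤ b` when there is a morphism `a ⟶ b`. -/
abbrev homPartialOrder {𝒜 : Type*} [Category 𝒜] [∀ a b : 𝒜, Finite (a ⟶ b)]
    (hskel : Skeletal 𝒜) (hid : ∀ (a : 𝒜) (f : a ⟶ a), f ≫ f = f → f = 𝟙 a) :
    PartialOrder 𝒜 where
  le a b := Nonempty (a ⟶ b)
  le_refl a := ⟨𝟙 a⟩
  le_trans _ _ _ := fun ⟨f⟩ ⟨g⟩ => ⟨f ≫ g⟩
  le_antisymm _ _ := fun ⟨f⟩ ⟨g⟩ => hskel (nonempty_iso_of_hom_of_hom hid f g)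

/-- The entries of `(d⁻¹ N)ᵏ d⁻¹`, with `d` diagonal, as sums over paths. -/
theorem pow_mul_diagonal_apply_eq_sum_paths {ι K : Type*} [Fintype ι] [Field K]
    (N : Matrix ι ι K) (d : ι → K) (k : ℕ) (a b : ι) :
    ((Matrix.diagonal d⁻¹ * N) ^ k * Matrix.diagonal d⁻¹) a b =
      ∑ c : Fin (k + 1) → ι, if c 0 = a ∧ c (Fin.last k) = b then
        (∏ i : Fin k, N (c i.castSucc) (c i.succ)) / ∏ i : Fin (k + 1), d (c i) else 0 := by
  induction k generalizing a with
  | zero =>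
    rw [← (Equiv.funUnique (Fin 1) ι).symm.sum_comp]
    by_cases h : a = b
    · subst h
      simp
    · simp only [pow_zero, one_mul, Matrix.diagonal_apply_ne _ h]
      refine (Finset.sum_eq_zero fun x _ => if_neg ?_).symm
      rintro ⟨rfl, rfl⟩
      exact h rfl
  | succ k ih =>
    rw [eq_comm, ← (Fin.consEquiv fun _ => ι).sum_comp, Fintype.sum_prod_type,
      Finset.sum_eq_single a]
    · rw [pow_succ', mul_assoc, Matrix.mul_apply]
      simp only [ih, Finset.mul_sum, Matrix.diagonal_mul]
      rw [Finset.sum_comm]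
      refine Finset.sum_congr rfl fun c _ => ?_
      rw [eq_comm, Finset.sum_eq_single (c 0)]
      · by_cases h : c (Fin.last k) = b
        · have hcons : (Fin.consEquiv fun _ => ι) (a, c) = (Fin.cons a c : Fin (k + 2) → ι) := rfl
          have hnum : ∏ i : Fin (k + 1), N ((Fin.cons a c : Fin (k + 2) → ι) i.castSucc) (c i) =
              N a (c 0) * ∏ i : Fin k, N (c i.castSucc) (c i.succ) := by
            simp only [Fin.prod_univ_succ (n := k), Fin.castSucc_zero, Fin.cons_zero,
              ← Fin.succ_castSucc, Fin.cons_succ]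
          rw [hcons, Fin.prod_univ_succ (n := k + 1)]
          simp only [Fin.cons_zero, Fin.cons_succ, ← Fin.succ_last, h, hnum, true_and, if_true,
            Pi.inv_apply]
          ring
        · simp [Fin.consEquiv, ← Fin.succ_last, h]
      · intro y _ hy
        simp [hy.symm]
      · simp
    · intro x _ hx
      simp [Fin.consEquiv, hx]
    · simp

theorem stmt8 {𝒜 : Type*} [Category 𝒜] [Fintype 𝒜] [∀ a b : 𝒜, Fintype (a ⟶ b)]
    (hskel : Skeletal 𝒜)
    (hid : ∀ (a : 𝒜) (f : a ⟶ a), f ≫ f = f → f = 𝟙 a) :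
    IsUnit (zeta 𝒜).det ∧ ∀ a b : 𝒜,
      (zeta 𝒜)⁻¹ a b =
        ∑ k ∈ Finset.range (Fintype.card 𝒜), (-1 : ℚ) ^ k *
          ∑ c ∈ Finset.univ.filter (fun c : Fin (k + 1) → 𝒜 =>
              Function.Injective c ∧ c 0 = a ∧ c (Fin.last k) = b),
            (∏ i : Fin k, (Fintype.card (c i.castSucc ⟶ c i.succ) : ℚ)) /
              (∏ i : Fin (k + 1), (Fintype.card (c i ⟶ c i) : ℚ)) := by
  have hd : ∀ a : 𝒜, (Fintype.card (a ⟶ a) : ℚ) ≠ 0 := fun a =>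
    Nat.cast_ne_zero.2 (Fintype.card_pos_iff.2 ⟨𝟙 a⟩).ne'
  set d : 𝒜 → ℚ := fun a => (Fintype.card (a ⟶ a) : ℚ)
  set N : Matrix 𝒜 𝒜 ℚ := zeta 𝒜 - Matrix.diagonal d with hN
  have N_self : ∀ a, N a a = 0 := fun a => by simp [hN, zeta, d]
  have N_of_ne : ∀ {a b : 𝒜}, a ≠ b → N a b = Fintype.card (a ⟶ b) := fun h => by
    simp [hN, zeta, h]
  have prod_eq_zero : ∀ {k : ℕ} (c : Fin (k + 1) → 𝒜), ¬ Function.Injective c →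
      ∏ i : Fin k, N (c i.castSucc) (c i.succ) = 0 := by
    intro k c hc
    let := homPartialOrder hskel hid
    contrapose! hc
    refine (Fin.strictMono_iff_lt_succ.2 fun i => ?_).injective
    have hi := Finset.prod_ne_zero_iff.1 hc i (Finset.mem_univ i)
    have hne : c i.castSucc ≠ c i.succ := fun h => hi (h ▸ N_self _)
    rw [N_of_ne hne, Nat.cast_ne_zero] at hi
    exact lt_of_le_of_ne (Fintype.card_pos_iff.1 (Nat.pos_of_ne_zero hi)) hne
  set X : Matrix 𝒜 𝒜 ℚ := Matrix.diagonal d⁻¹ * N with hX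
  have hDD : Matrix.diagonal d * Matrix.diagonal d⁻¹ = 1 := by
    rw [Matrix.diagonal_mul_diagonal, ← Matrix.diagonal_one]
    congr 1
    ext a
    simp [hd a, d]
  have hDD' : Matrix.diagonal d⁻¹ * Matrix.diagonal d = 1 := mul_eq_one_comm.1 hDD
  have X_pow : X ^ Fintype.card 𝒜 = 0 := by
    have h : X ^ Fintype.card 𝒜 * Matrix.diagonal d⁻¹ = 0 := by
      ext a b
      rw [pow_mul_diagonal_apply_eq_sum_paths, Matrix.zero_apply]
      refine Finset.sum_eq_zero fun c _ => ?_
      rw [prod_eq_zero c fun h => by simpa using Fintype.card_le_of_injective c h]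
      simp
    rw [← mul_one (X ^ _), ← hDD', ← mul_assoc, h, zero_mul]
  have zeta_eq : zeta 𝒜 = Matrix.diagonal d * (1 - -X) := by
    rw [sub_neg_eq_add, mul_add, mul_one, hX, ← mul_assoc, hDD, one_mul, hN, add_sub_cancel]
  have right_inv : zeta 𝒜 *
      ((∑ k ∈ Finset.range (Fintype.card 𝒜), (-X) ^ k) * Matrix.diagonal d⁻¹) = 1 := by
    rw [zeta_eq, mul_assoc, ← mul_assoc (1 - -X), mul_neg_geom_sum, neg_pow, X_pow, mul_zero,
      sub_zero, one_mul, hDD]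
  refine ⟨Matrix.isUnit_det_of_right_inverse right_inv, fun a b => ?_⟩
  rw [Matrix.inv_eq_right_inv right_inv, Finset.sum_mul, Matrix.sum_apply]
  refine Finset.sum_congr rfl fun k _ => ?_
  have hsign : (-X) ^ k * Matrix.diagonal d⁻¹ = (-1 : ℚ) ^ k • (X ^ k * Matrix.diagonal d⁻¹) := by
    rw [← smul_mul_assoc, ← smul_pow, neg_one_smul]
  rw [hsign, Matrix.smul_apply, smul_eq_mul, pow_mul_diagonal_apply_eq_sum_paths,
    Finset.sum_filter]
  congr 1
  refine Finset.sum_congr rfl fun c _ => ?_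
  by_cases hc : Function.Injective c
  · have hprod : ∏ i : Fin k, N (c i.castSucc) (c i.succ) =
        ∏ i : Fin k, (Fintype.card (c i.castSucc ⟶ c i.succ) : ℚ) :=
      Finset.prod_congr rfl fun i _ => N_of_ne fun h => i.castSucc_lt_succ.ne (hc h)
    simp only [hprod, hc, true_and, d]
  · simp [prod_eq_zero c hc, hc]
end

section
/- Let (X,d) be a finite metric space with n = |X| ≥ 2 points. Then for every natural number k with k ≤ n − 2: ∑_{σ ∈ Perm(X)} (-1)^{c(σ)} · ( ∑_{x ∈ X} d(x, σ(x)) )^k = 0, where c(σ) is the number of orbits of σ on X (cycles including fixed points). -/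
attribute [local instance] Classical.propDecidable

theorem neg_one_pow_orbitCount {I : Type*} [Fintype I] (σ : Equiv.Perm I) :
    (-1 : ℝ) ^ orbitCount σ = (-1) ^ Fintype.card I * ((Equiv.Perm.sign σ : ℤ) : ℝ) := by
  have hle : σ.support.card ≤ Fintype.card I := Finset.card_le_univ _
  obtain ⟨m, hm⟩ := Nat.exists_eq_add_of_le hle
  have hsq : ((-1 : ℝ) ^ σ.support.card) * (-1) ^ σ.support.card = 1 := by
    rw [← mul_pow]; simp
  rw [Equiv.Perm.sign_of_cycleType, Equiv.Perm.sum_cycleType, orbitCount, hm,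
    Nat.add_sub_cancel_left]
  push_cast
  rw [pow_add, pow_add, pow_add]
  linear_combination
    (-(-1 : ℝ) ^ Multiset.card σ.cycleType * (-1) ^ m) * hsq

/-- Right multiplication by the transposition of two points outside `s` is a sign-reversing
involution that preserves every function depending only on the values on `s`. -/
theorem sum_sign_mul_eq_zero_of_eqOn {I : Type*} [Fintype I] (s : Finset I)
    (hs : s.card + 2 ≤ Fintype.card I) (F : Equiv.Perm I → ℝ)
    (hF : ∀ σ τ : Equiv.Perm I, (∀ x ∈ s, σ x = τ x) → F σ = F τ) :
    ∑ σ : Equiv.Perm I, ((Equiv.Perm.sign σ : ℤ) : ℝ) * F σ = 0 := by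
  have hcard : 1 < sᶜ.card := by
    rw [Finset.card_compl]; omega
  obtain ⟨a, ha, b, hb, hab⟩ := Finset.one_lt_card.mp hcard
  rw [Finset.mem_compl] at ha hb
  have hneg : ∑ σ : Equiv.Perm I, ((Equiv.Perm.sign σ : ℤ) : ℝ) * F σ =
      -∑ σ : Equiv.Perm I, ((Equiv.Perm.sign σ : ℤ) : ℝ) * F σ := by
    rw [← Finset.sum_neg_distrib, ← Equiv.sum_comp (Equiv.mulRight (Equiv.swap a b))]
    refine Finset.sum_congr rfl fun σ _ => ?_
    have hσ : F (σ * Equiv.swap a b) = F σ := hF _ _ fun x hx => by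
      rw [Equiv.Perm.mul_apply, Equiv.swap_apply_of_ne_of_ne]
      · rintro rfl; exact ha hx
      · rintro rfl; exact hb hx
    simp [hσ, Equiv.Perm.sign_swap hab]
  linarith

theorem sum_sign_mul_sum_pow_eq_zero {I : Type*} [Fintype I] (f : I → I → ℝ) (k : ℕ)
    (hk : k + 2 ≤ Fintype.card I) :
    ∑ σ : Equiv.Perm I, ((Equiv.Perm.sign σ : ℤ) : ℝ) * (∑ x, f x (σ x)) ^ k = 0 := by
  simp_rw [Fintype.sum_pow, Finset.mul_sum]
  rw [Finset.sum_comm]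
  refine Finset.sum_eq_zero fun p _ => ?_
  refine sum_sign_mul_eq_zero_of_eqOn (Finset.univ.image p) ?_ _ fun σ τ h => ?_
  · have := Finset.card_image_le (s := Finset.univ) (f := p)
    rw [Finset.card_univ, Fintype.card_fin] at this
    omega
  · exact Finset.prod_congr rfl fun i _ => by
      rw [h (p i) (Finset.mem_image_of_mem p (Finset.mem_univ i))]

theorem stmt14 {X : Type*} [MetricSpace X] [Fintype X]
    (hn : 2 ≤ Fintype.card X) (k : ℕ) (hk : k ≤ Fintype.card X - 2) :
    ∑ σ : Equiv.Perm X, (-1 : ℝ) ^ (orbitCount σ) * (∑ x : X, dist x (σ x)) ^ k = 0 := by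
  simp_rw [neg_one_pow_orbitCount, mul_assoc]
  rw [← Finset.mul_sum, sum_sign_mul_sum_pow_eq_zero dist k (by omega), mul_zero]
end

section
/- Let (X,d) be a finite metric space with points enumerated x_1, …, x_n. Then ∑_{x,y ∈ X} ∑_{τ ∈ Perm(X), τ(y) = x} (-1)^{n + c(τ)} · ( ∑_{v ≠ y} d(v, τ(v)) )^{n} = n! · C_n, where C_n = (1/2) ∑_{i ≠ j} det(N_{i,j}) with N_{i,j} the n×n matrix whose l-th column is the all-ones vector if l = i, the vector of squared distances (d(x_j, x_1)², …, d(x_j, x_n)²)ᵀ if l = j, and the vector (d(x_l, x_1), …, d(x_l, x_n))ᵀ otherwise, and c(τ) is the number of orbits of τ on X (cycles including fixed points). -/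
attribute [local instance] Classical.propDecidable

open Finset in
theorem neg_one_pow_card_add_orbitCount {X : Type*} [Fintype X] (τ : Equiv.Perm X) :
    (-1 : ℝ) ^ (Fintype.card X + orbitCount τ) = ((Equiv.Perm.sign τ : ℤ) : ℝ) := by
  have hle : τ.support.card ≤ Fintype.card X := card_le_univ _
  rw [Equiv.Perm.sign_of_cycleType, Equiv.Perm.sum_cycleType, orbitCount]
  push_cast
  obtain ⟨m, hm⟩ := Nat.exists_eq_add_of_le hle
  rw [hm, show #τ.support + m + (τ.cycleType.card + (#τ.support + m - #τ.support)) =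
    (#τ.support + τ.cycleType.card) + 2 * m by omega, pow_add _ _ (2 * m), pow_mul]
  simp

/-- The exponent vector that is `0` at `y`, `2` at `j`, and `1` elsewhere. -/
noncomputable def excessExponent {X : Type*} (y j : X) (v : X) : ℕ :=
  if v = y then 0 else if v = j then 2 else 1

/-- The matrix with entries `d(v, r) ^ k v` in row `r` and column `v`. -/
noncomputable def distPowMatrix {X : Type*} [MetricSpace X] (k : X → ℕ) : Matrix X X ℝ :=
  Matrix.of fun r v => dist v r ^ k v

theorem det_distPowMatrix_eq_zero {X : Type*} [MetricSpace X] [Fintype X] {k : X → ℕ} {y v : X}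
    (hyv : y ≠ v) (hy : k y = 0) (hv : k v = 0) : (distPowMatrix k).det = 0 :=
  Matrix.det_zero_of_column_eq hyv fun r => by simp [distPowMatrix, hy, hv]

theorem sum_sign_mul_sum_dist_pow {X : Type*} [MetricSpace X] [Fintype X] (s : Finset X) (n : ℕ) :
    ∑ τ : Equiv.Perm X, ((Equiv.Perm.sign τ : ℤ) : ℝ) * (∑ v ∈ s, dist v (τ v)) ^ n =
      ∑ k ∈ s.piAntidiag n, (Nat.multinomial s k : ℝ) * (distPowMatrix k).det := by
  simp_rw [Finset.sum_pow_eq_sum_piAntidiag, Matrix.det_apply', Finset.mul_sum]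
  rw [Finset.sum_comm]
  refine Finset.sum_congr rfl fun k hk => Finset.sum_congr rfl fun τ _ => ?_
  have hprod : ∏ v ∈ s, dist v (τ v) ^ k v = ∏ v, distPowMatrix k (τ v) v := by
    refine Finset.prod_subset (Finset.subset_univ s) fun v _ hv => ?_
    have : k v = 0 := by
      by_contra h
      exact hv ((Finset.mem_piAntidiag.1 hk).2 v h)
    simp [this]
  rw [hprod]
  ring

theorem sum_excessExponent {X : Type*} [Fintype X] {y j : X} (hj : j ≠ y) :
    ∑ v ∈ Finset.univ.erase y, excessExponent y j v = Fintype.card X := by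
  have h : ∀ v ∈ Finset.univ.erase y, excessExponent y j v = 1 + if v = j then 1 else 0 := by
    intro v hv
    have := Finset.ne_of_mem_erase hv
    by_cases hvj : v = j <;> simp [excessExponent, this, hvj, hj]
  rw [Finset.sum_congr rfl h, Finset.sum_add_distrib, Finset.sum_ite_eq']
  have := Fintype.card_pos_iff.2 ⟨y⟩
  simp [hj, Finset.card_erase_of_mem]
  omega

theorem excessExponent_mem_piAntidiag {X : Type*} [Fintype X] {y j : X} (hj : j ≠ y) :
    excessExponent y j ∈ (Finset.univ.erase y).piAntidiag (Fintype.card X) := by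
  refine Finset.mem_piAntidiag.2 ⟨sum_excessExponent hj, fun v hv => ?_⟩
  refine Finset.mem_erase.2 ⟨fun h => hv ?_, Finset.mem_univ v⟩
  simp [excessExponent, h]

theorem multinomial_excessExponent {X : Type*} [Fintype X] {y j : X} (hj : j ≠ y) :
    (Nat.multinomial (Finset.univ.erase y) (excessExponent y j) : ℝ) =
      (Nat.factorial (Fintype.card X) : ℝ) * (1 / 2) := by
  have hspec := Nat.multinomial_spec (Finset.univ.erase y) (excessExponent y j)
  rw [sum_excessExponent hj] at hspec
  have hprod : ∏ v ∈ Finset.univ.erase y, (excessExponent y j v).factorial = 2 := by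
    rw [Finset.prod_eq_single j]
    · simp [excessExponent, hj]
    · intro v _ hv
      by_cases h : v = y <;> simp [excessExponent, h, hv]
    · simp [hj]
  rw [hprod] at hspec
  rw [← hspec]
  push_cast
  ring

theorem exists_eq_excessExponent {X : Type*} [Fintype X] {y : X} {k : X → ℕ}
    (hk : k ∈ (Finset.univ.erase y).piAntidiag (Fintype.card X)) (hpos : ∀ v ≠ y, k v ≠ 0) :
    ∃ j ≠ y, excessExponent y j = k := by
  obtain ⟨hsum, hsupp⟩ := Finset.mem_piAntidiag.1 hk
  have hy : k y = 0 := by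
    by_contra h
    simpa using hsupp y h
  have hsplit : ∑ v ∈ Finset.univ.erase y, k v = ∑ v ∈ Finset.univ.erase y, (k v - 1 + 1) :=
    Finset.sum_congr rfl fun v hv => by
      have := hpos v (Finset.ne_of_mem_erase hv)
      omega
  rw [hsum, Finset.sum_add_distrib, Finset.sum_const, Finset.card_erase_of_mem (Finset.mem_univ y),
    Finset.card_univ, smul_eq_mul, mul_one] at hsplit
  have hcard := Fintype.card_pos_iff.2 ⟨y⟩
  have hone : ∑ v ∈ Finset.univ.erase y, (k v - 1) = 1 := by omega
  obtain ⟨j, hj, hj0⟩ := Finset.exists_ne_zero_of_sum_ne_zero (hone.trans_ne one_ne_zero)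
  have hadd := Finset.add_sum_erase _ (fun v => k v - 1) hj
  have hj1 : k j - 1 = 1 := by omega
  have hzero : ∑ v ∈ (Finset.univ.erase y).erase j, (k v - 1) = 0 := by omega
  refine ⟨j, Finset.ne_of_mem_erase hj, funext fun v => ?_⟩
  by_cases hv : v = y
  · simp [excessExponent, hv, hy]
  have hvpos := hpos v hv
  by_cases hvj : v = j
  · subst hvj
    simp only [excessExponent, hv, if_true, if_false]
    omega
  · have := Finset.sum_eq_zero_iff.1 hzero v (by simp [hv, hvj])
    simp only [excessExponent, hv, hvj, if_false]
    omega

theorem sum_multinomial_mul_det_distPowMatrix {X : Type*} [MetricSpace X] [Fintype X] (y : X) :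
    ∑ k ∈ (Finset.univ.erase y).piAntidiag (Fintype.card X),
        (Nat.multinomial (Finset.univ.erase y) k : ℝ) * (distPowMatrix k).det =
      ∑ j ∈ Finset.univ.erase y, (Nat.factorial (Fintype.card X) : ℝ) * (1 / 2) *
        (distPowMatrix (excessExponent y j)).det := by
  symm
  refine Finset.sum_of_injOn (excessExponent y) ?_ ?_ ?_ ?_
  · intro i hi j hj hij
    have hi' : i ≠ y := by simpa using hi
    have h := congrFun hij i
    by_contra hne
    simp [excessExponent, hi', hne] at h
  · intro j hj
    exact excessExponent_mem_piAntidiag (by simpa using hj)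
  · intro k hk hnot
    have hy : k y = 0 := by
      by_contra h
      simpa using (Finset.mem_piAntidiag.1 hk).2 y h
    by_cases hpos : ∀ v ≠ y, k v ≠ 0
    · obtain ⟨j, hj, rfl⟩ := exists_eq_excessExponent hk hpos
      exact absurd ⟨j, by simpa using hj, rfl⟩ hnot
    · push Not at hpos
      obtain ⟨v, hv, hv0⟩ := hpos
      rw [det_distPowMatrix_eq_zero hv.symm hy hv0, mul_zero]
  · intro j hj
    rw [multinomial_excessExponent (Finset.ne_of_mem_erase hj)]

theorem stmt19 {X : Type*} [MetricSpace X] [Fintype X] (n : ℕ) (e : Fin n ≃ X) :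
    ∑ x : X, ∑ y : X,
        ∑ τ ∈ Finset.univ.filter (fun τ : Equiv.Perm X => τ y = x),
          (-1 : ℝ) ^ (n + orbitCount τ) *
            (∑ v ∈ Finset.univ.erase y, dist v (τ v)) ^ n =
      (Nat.factorial n : ℝ) *
        ((1 / 2 : ℝ) *
          ∑ i : Fin n, ∑ j ∈ Finset.univ.erase i,
            (Matrix.of fun r l : Fin n =>
              if l = i then (1 : ℝ)
              else if l = j then dist (e j) (e r) ^ 2
              else dist (e l) (e r)).det) := by
  have hn : n = Fintype.card X := by simpa using Fintype.card_congr e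
  have hcollect : ∀ F : X → Equiv.Perm X → ℝ,
      ∑ x : X, ∑ y : X, ∑ τ ∈ Finset.univ.filter (fun τ : Equiv.Perm X => τ y = x), F y τ =
        ∑ y : X, ∑ τ : Equiv.Perm X, F y τ := by
    intro F
    rw [Finset.sum_comm]
    exact Finset.sum_congr rfl fun y _ => Finset.sum_fiberwise _ (fun τ : Equiv.Perm X => τ y) _
  have hdet : ∀ i j : Fin n, (Matrix.of fun r l : Fin n =>
      if l = i then (1 : ℝ) else if l = j then dist (e j) (e r) ^ 2
        else dist (e l) (e r)).det = (distPowMatrix (excessExponent (e i) (e j))).det := by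
    intro i j
    rw [← Matrix.det_submatrix_equiv_self e]
    congr 1
    ext r l
    by_cases hi : l = i
    · simp [distPowMatrix, excessExponent, hi]
    · by_cases hj : l = j <;> simp [distPowMatrix, excessExponent, hi, hj]
  have herase : ∀ i : Fin n, ∑ j ∈ Finset.univ.erase i,
      (distPowMatrix (excessExponent (e i) (e j))).det =
        ∑ x ∈ Finset.univ.erase (e i), (distPowMatrix (excessExponent (e i) x)).det := fun i =>
    Finset.sum_equiv e (by simp) fun _ _ => rfl
  simp_rw [hdet, herase]
  rw [Equiv.sum_comp e fun y => ∑ x ∈ Finset.univ.erase y,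
    (distPowMatrix (excessExponent y x)).det, hcollect, hn]
  simp_rw [neg_one_pow_card_add_orbitCount, sum_sign_mul_sum_dist_pow,
    sum_multinomial_mul_det_distPowMatrix, ← Finset.mul_sum, mul_assoc]
end
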